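/- Let K ⊂ ℝ^{2n} be a convex body with 0 in its interior whose support function h_K is C¹ on ℝ^{2n}∖{0}, and let p > 1. Then z ∈ 𝓔_p is a critical point of the functional I_p(z) = ∫₀^{2π} h_K^p(ż(t)) dt if and only if there exists a fixed vector α ∈ ℝ^{2n} such that ∇(h_K^p)(ż(t)) = (p/2)·λ·J z(t) + α for almost every t, where λ = I_p(z). -/

import Mathlib

open MeasureTheory Real Set Filter intervalIntegral Metric
open scoped InnerProductSpace Topology Pointwise

noncomputable section

/-- The phase space `ℝ^{2n}`. -/
abbrev E (n : ℕ) := EuclideanSpace ℝ (Fin (2 * n))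

/-- The standard complex structure `J` on `ℝ^{2n}`, given in coordinates
`(x₁,y₁,…,xₙ,yₙ)` by `J(x₁,y₁,…,xₙ,yₙ) = (−y₁,x₁,…,−yₙ,xₙ)`. -/
def Jmap (n : ℕ) (v : E n) : E n := WithLp.toLp 2 fun i =>
  if _h : i.val % 2 = 0 then -v ⟨i.val + 1, by have := i.isLt; omega⟩
  else v ⟨i.val - 1, by have := i.isLt; omega⟩

/-- The support function `h_K(u) = sup_{x ∈ K} ⟨x, u⟩`. -/
def suppFn (n : ℕ) (K : Set (E n)) (u : E n) : ℝ :=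
  sSup ((fun x => ⟪x, u⟫_ℝ) '' K)

/-- A convex body: a compact convex set with nonempty interior. -/
def IsConvexBody (n : ℕ) (K : Set (E n)) : Prop :=
  IsCompact K ∧ Convex ℝ K ∧ (interior K).Nonempty

/-- Membership in the loop space `𝓔_p`: the pair `(z, dz)` represents an absolutely
continuous `2π`-periodic loop `z` with derivative `dz ∈ L^p([0,2π])`, mean zero and
normalized action `(1/2)∫₀^{2π} ⟨J z, ż⟩ = 1`. -/
def InE (n : ℕ) (p : ℝ) (z dz : ℝ → E n) : Prop :=
  Function.Periodic z (2 * π) ∧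
  (∀ a b : ℝ, IntervalIntegrable dz volume a b) ∧
  (∀ t, z t = z 0 + ∫ s in (0:ℝ)..t, dz s) ∧
  MemLp dz (ENNReal.ofReal p) (volume.restrict (Set.Ioc (0:ℝ) (2 * π))) ∧
  (∫ t in (0:ℝ)..(2 * π), z t) = 0 ∧
  (1 / 2) * ∫ t in (0:ℝ)..(2 * π), ⟪Jmap n (z t), dz t⟫_ℝ = 1

/-- The (Ekeland–Hofer–Zehnder) capacity of a convex body,
`c(S) = (π · inf_{z ∈ 𝓔₂} (1/2π) ∫₀^{2π} h_S(ż(t)) dt)²`. -/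
def capacity (n : ℕ) (S : Set (E n)) : ℝ :=
  (π * sInf { r : ℝ | ∃ z dz : ℝ → E n, InE n 2 z dz ∧
      r = (1 / (2 * π)) * ∫ t in (0:ℝ)..(2 * π), suppFn n S (dz t) }) ^ 2

/-- The action `𝒜(γ) = (1/2) ∫₀^{T₀} ⟨−Jγ̇(t), γ(t)⟩ dt` of a `T₀`-periodic curve. -/
def action (n : ℕ) (γ : ℝ → E n) (T₀ : ℝ) : ℝ :=
  (1 / 2) * ∫ t in (0:ℝ)..T₀, ⟪-Jmap n (deriv γ t), γ t⟫_ℝ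

/-- A closed characteristic on `∂K`: a nonconstant `T₀`-periodic `C¹` curve lying on
`∂K` satisfying `γ̇ = d·J∇F(γ)` for some `d > 0`, where `F = ‖·‖_K²`. -/
def IsClosedCharacteristic (n : ℕ) (K : Set (E n)) (γ : ℝ → E n) (T₀ : ℝ) : Prop :=
  0 < T₀ ∧ Function.Periodic γ T₀ ∧ ContDiff ℝ 1 γ ∧ (∃ s t, γ s ≠ γ t) ∧
  (∀ t, γ t ∈ frontier K) ∧
  ∃ d : ℝ, 0 < d ∧ ∀ t, deriv γ t = d • Jmap n (gradient (fun x => gauge K x ^ 2) (γ t))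

/-- A capacity carrier of `K`: a closed characteristic on `∂K` of minimal action. -/
def IsCapacityCarrier (n : ℕ) (K : Set (E n)) (γ : ℝ → E n) (T₀ : ℝ) : Prop :=
  IsClosedCharacteristic n K γ T₀ ∧
  ∀ γ' T₀', IsClosedCharacteristic n K γ' T₀' → action n γ T₀ ≤ action n γ' T₀'

/-- The minimal action of a closed characteristic on `∂K`. -/
def minAction (n : ℕ) (K : Set (E n)) : ℝ :=
  sInf { a : ℝ | ∃ γ T₀, IsClosedCharacteristic n K γ T₀ ∧ a = action n γ T₀ }

/-- `K` has smooth boundary: its gauge function is `C¹` away from the origin. -/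
def HasSmoothBoundary (n : ℕ) (K : Set (E n)) : Prop :=
  ContDiffOn ℝ 1 (gauge K) {(0 : E n)}ᶜ

/-- The `p`-sum `K +ₚ T` of Firey: the convex body with support function
`(h_K^p + h_T^p)^{1/p}`. -/
def pSum (n : ℕ) (p : ℝ) (K T : Set (E n)) : Set (E n) :=
  { x | ∀ u, ⟪x, u⟫_ℝ ≤ (suppFn n K u ^ p + suppFn n T u ^ p) ^ (1 / p) }

/-- The polar body `T° = {x : ⟨x,y⟩ ≤ 1 for all y ∈ T}`. -/
def polarBody (n : ℕ) (T : Set (E n)) : Set (E n) :=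
  { x | ∀ y ∈ T, ⟪x, y⟫_ℝ ≤ 1 }

/-- The length `∫₀^{T₀} ‖γ̇(t)‖_B dt` of a curve measured with the gauge of `B`. -/
def lengthIn (n : ℕ) (B : Set (E n)) (γ : ℝ → E n) (T₀ : ℝ) : ℝ :=
  ∫ t in (0:ℝ)..T₀, gauge B (deriv γ t)

/-- Critical point of the functional `I_p(z) = ∫₀^{2π} h_K^p(ż(t)) dt` on `𝓔_p`. -/
def IsCriticalPoint (n : ℕ) (p : ℝ) (K : Set (E n)) (z dz : ℝ → E n) : Prop :=
  ∀ ξ dξ : ℝ → E n,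
    Function.Periodic ξ (2 * π) →
    (∀ a b : ℝ, IntervalIntegrable dξ volume a b) →
    (∀ t, ξ t = ξ 0 + ∫ s in (0:ℝ)..t, dξ s) →
    MemLp dξ (ENNReal.ofReal p) (volume.restrict (Set.Ioc (0:ℝ) (2 * π))) →
    (∫ t in (0:ℝ)..(2 * π), ξ t) = 0 →
    (∫ t in (0:ℝ)..(2 * π), ⟪ξ t, Jmap n (dz t)⟫_ℝ) = 0 →
    (∫ t in (0:ℝ)..(2 * π), ⟪gradient (fun u => suppFn n K u ^ p) (dz t), dξ t⟫_ℝ) = 0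

/-- The rotation-invariant probability measure on the unit sphere of `ℝ^{2n}`. -/
def sphereMeasure (n : ℕ) : Measure (sphere (0 : E n) 1) :=
  ((volume : Measure (E n)).toSphere Set.univ)⁻¹ • (volume : Measure (E n)).toSphere

/-- The mean width parameter `M*(K) = ∫_{S^{2n-1}} h_K dσ`. -/
def meanWidth (n : ℕ) (K : Set (E n)) : ℝ :=
  ∫ x : sphere (0 : E n) 1, suppFn n K (x : E n) ∂(sphereMeasure n)

/-! ### The complex structure -/

/-- The index paired with `i` under `J`. -/
def pairIdx (n : ℕ) (i : Fin (2 * n)) : Fin (2 * n) :=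
  if _h : i.val % 2 = 0 then ⟨i.val + 1, by have := i.isLt; omega⟩
  else ⟨i.val - 1, by have := i.isLt; omega⟩

/-- The sign attached to `i` under `J`. -/
def pairSign (n : ℕ) (i : Fin (2 * n)) : ℝ := if i.val % 2 = 0 then -1 else 1

lemma pairIdx_invol (n : ℕ) : Function.Involutive (pairIdx n) := by
  intro i
  apply Fin.ext
  unfold pairIdx
  by_cases h : i.val % 2 = 0
  · have h' : ¬ ((i.val + 1) % 2 = 0) := by omega
    simp [h, h']
  · have h' : (i.val - 1) % 2 = 0 := by omega
    simp [h, h']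
    omega

lemma pairSign_pairIdx (n : ℕ) (i : Fin (2 * n)) : pairSign n (pairIdx n i) = -pairSign n i := by
  unfold pairSign pairIdx
  by_cases h : i.val % 2 = 0
  · have h' : ¬ ((i.val + 1) % 2 = 0) := by omega
    simp [h, h']
  · have h' : (i.val - 1) % 2 = 0 := by omega
    simp [h, h']

lemma Jmap_apply (n : ℕ) (v : E n) (i : Fin (2 * n)) :
    Jmap n v i = pairSign n i * v (pairIdx n i) := by
  unfold Jmap pairSign pairIdx
  simp only
  split_ifs <;> simp

/-- `J` as a continuous linear map. -/
def JL (n : ℕ) : E n →L[ℝ] E n :=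
  LinearMap.toContinuousLinearMap
    { toFun := Jmap n
      map_add' := by intro u v; ext i; simp [Jmap_apply, mul_add]
      map_smul' := by intro c v; ext i; simp [Jmap_apply]; ring }

lemma JL_apply (n : ℕ) (v : E n) : JL n v = Jmap n v := rfl

lemma inner_Jmap (n : ℕ) (u v : E n) : ⟪Jmap n u, v⟫_ℝ = -⟪u, Jmap n v⟫_ℝ := by
  simp only [PiLp.inner_apply, Jmap_apply]
  rw [← Equiv.sum_comp (pairIdx_invol n).toPerm, ← Finset.sum_neg_distrib]
  refine Finset.sum_congr rfl fun i _ => ?_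
  simp [pairSign_pairIdx, pairIdx_invol n i]
  ring

/-! ### Integration by parts -/

lemma scalar_ibp {T : ℝ} {f df g dg : ℝ → ℝ}
    (hdf : IntervalIntegrable df volume 0 T) (hdg : IntervalIntegrable dg volume 0 T)
    (hf : ∀ t, f t = f 0 + ∫ s in (0:ℝ)..t, df s) (hg : ∀ t, g t = g 0 + ∫ s in (0:ℝ)..t, dg s)
    (hfT : f T = f 0) (hgT : g T = g 0) :
    ∫ t in (0:ℝ)..T, f t * dg t = -∫ t in (0:ℝ)..T, df t * g t := by
  have key : ∀ {f df : ℝ → ℝ}, IntervalIntegrable df volume 0 T →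
      (∀ t, f t = f 0 + ∫ s in (0:ℝ)..t, df s) →
      AbsolutelyContinuousOnInterval f 0 T ∧ ∀ᵐ x, x ∈ uIcc 0 T → deriv f x = df x := by
    intro f df hdf hf
    have hfe : f = (fun _ => f 0) + fun t => ∫ s in (0:ℝ)..t, df s := by
      funext t; exact hf t
    constructor
    · have h1 : AbsolutelyContinuousOnInterval (fun _ : ℝ => f 0) 0 T :=
        (contDiff_const.contDiffOn).absolutelyContinuousOnInterval
      have h2 := hdf.absolutelyContinuousOnInterval_intervalIntegral (c := 0) (by simp)
      rw [hfe]
      exact h1.add h2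
    · filter_upwards [hdf.ae_hasDerivAt_integral] with x hx hxm
      have := hx hxm 0 (by simp)
      have h3 := this.const_add (f 0)
      have h4 : HasDerivAt f (df x) x := by
        rw [hfe]; exact h3
      exact h4.deriv
  obtain ⟨af, ef⟩ := key hdf hf
  obtain ⟨ag, eg⟩ := key hdg hg
  have := af.integral_mul_deriv_eq_deriv_mul ag
  rw [hfT, hgT, sub_self, zero_sub] at this
  have e1 : ∫ t in (0:ℝ)..T, f t * dg t = ∫ t in (0:ℝ)..T, f t * deriv g t := by
    apply intervalIntegral.integral_congr_ae
    filter_upwards [eg] with x hx hxm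
    rw [hx (uIoc_subset_uIcc hxm)]
  have e2 : ∫ t in (0:ℝ)..T, df t * g t = ∫ t in (0:ℝ)..T, deriv f t * g t := by
    apply intervalIntegral.integral_congr_ae
    filter_upwards [ef] with x hx hxm
    rw [hx (uIoc_subset_uIcc hxm)]
  rw [e1, e2, this]

lemma continuous_of_repr {n : ℕ} {f df : ℝ → E n}
    (hdf : ∀ a b : ℝ, IntervalIntegrable df volume a b)
    (hf : ∀ t, f t = f 0 + ∫ s in (0:ℝ)..t, df s) : Continuous f := by
  have hfe : f = fun t => f 0 + ∫ s in (0:ℝ)..t, df s := by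
    funext t; exact hf t
  rw [hfe]
  exact continuous_const.add (intervalIntegral.continuous_primitive hdf 0)

lemma intervalIntegrable_inner_cont {n : ℕ} {f g : ℝ → E n} {a b : ℝ} (hf : Continuous f)
    (hg : IntervalIntegrable g volume a b) :
    IntervalIntegrable (fun t => ⟪f t, g t⟫_ℝ) volume a b := by
  have : (fun t => ⟪f t, g t⟫_ℝ) = fun t => ∑ i, f t i * g t i := by
    funext t
    simp [PiLp.inner_apply, mul_comm]
  rw [this]
  have hc : ∀ i, Continuous fun t => f t i := fun i =>
    (EuclideanSpace.proj (𝕜 := ℝ) i).continuous.comp hf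
  have hi : ∀ i, IntervalIntegrable (fun t => g t i) volume a b := fun i =>
    ⟨(EuclideanSpace.proj (𝕜 := ℝ) i).integrable_comp hg.1,
      (EuclideanSpace.proj (𝕜 := ℝ) i).integrable_comp hg.2⟩
  have := IntervalIntegrable.sum (Finset.univ) (f := fun i t => f t i * g t i) (μ := volume)
    (a := a) (b := b) (fun i _ => (hi i).continuousOn_mul (hc i).continuousOn)
  have e : (fun t => ∑ i, f t i * g t i) = ∑ i, fun t => f t i * g t i := by
    funext t
    simp
  rw [e]
  exact this

lemma vector_ibp {n : ℕ} {T : ℝ} {f df g dg : ℝ → E n}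
    (hdf : ∀ a b : ℝ, IntervalIntegrable df volume a b)
    (hdg : ∀ a b : ℝ, IntervalIntegrable dg volume a b)
    (hf : ∀ t, f t = f 0 + ∫ s in (0:ℝ)..t, df s) (hg : ∀ t, g t = g 0 + ∫ s in (0:ℝ)..t, dg s)
    (hfT : f T = f 0) (hgT : g T = g 0) :
    ∫ t in (0:ℝ)..T, ⟪f t, dg t⟫_ℝ = -∫ t in (0:ℝ)..T, ⟪g t, df t⟫_ℝ := by
  have cf := continuous_of_repr hdf hf
  have cg := continuous_of_repr hdg hg
  have hc : ∀ {f : ℝ → E n} (_ : Continuous f) i, Continuous fun t => f t i := fun hf i =>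
    (EuclideanSpace.proj (𝕜 := ℝ) i).continuous.comp hf
  have hi : ∀ {g : ℝ → E n} (_ : ∀ a b : ℝ, IntervalIntegrable g volume a b) i (a b : ℝ),
      IntervalIntegrable (fun t => g t i) volume a b := fun hg i a b =>
    ⟨(EuclideanSpace.proj (𝕜 := ℝ) i).integrable_comp (hg a b).1,
      (EuclideanSpace.proj (𝕜 := ℝ) i).integrable_comp (hg a b).2⟩
  have hr : ∀ {f df : ℝ → E n} (_ : ∀ a b : ℝ, IntervalIntegrable df volume a b)
      (_ : ∀ t, f t = f 0 + ∫ s in (0:ℝ)..t, df s) i t,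
      f t i = f 0 i + ∫ s in (0:ℝ)..t, df s i := by
    intro f df hdf hf i t
    have := (EuclideanSpace.proj (𝕜 := ℝ) i).intervalIntegral_comp_comm (hdf 0 t)
    have e : f t i = f 0 i + (∫ s in (0:ℝ)..t, df s) i := by
      conv_lhs => rw [hf t]
      rfl
    rw [e]
    congr 1
    exact this.symm
  have s1 : ∫ t in (0:ℝ)..T, ⟪f t, dg t⟫_ℝ = ∑ i, ∫ t in (0:ℝ)..T, f t i * dg t i := by
    rw [← intervalIntegral.integral_finsetSum]
    · congr 1; funext t; simp [PiLp.inner_apply, mul_comm]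
    · intro i _
      exact (hi hdg i 0 T).continuousOn_mul (hc cf i).continuousOn
  have s2 : ∫ t in (0:ℝ)..T, ⟪g t, df t⟫_ℝ = ∑ i, ∫ t in (0:ℝ)..T, df t i * g t i := by
    rw [← intervalIntegral.integral_finsetSum]
    · congr 1
    · intro i _
      exact (hi hdf i 0 T).mul_continuousOn (hc cg i).continuousOn
  rw [s1, s2, ← Finset.sum_neg_distrib]
  refine Finset.sum_congr rfl fun i _ => ?_
  exact scalar_ibp (f := fun t => f t i) (g := fun t => g t i) (hi hdf i 0 T) (hi hdg i 0 T)
    (hr hdf hf i) (hr hdg hg i) (by simp [hfT]) (by simp [hgT])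

lemma J_repr {n : ℕ} {f df : ℝ → E n} (hdf : ∀ a b : ℝ, IntervalIntegrable df volume a b)
    (hf : ∀ t, f t = f 0 + ∫ s in (0:ℝ)..t, df s) :
    (∀ a b : ℝ, IntervalIntegrable (fun t => Jmap n (df t)) volume a b) ∧
    ∀ t, Jmap n (f t) = Jmap n (f 0) + ∫ s in (0:ℝ)..t, Jmap n (df s) := by
  constructor
  · intro a b
    exact ⟨(JL n).integrable_comp (hdf a b).1, (JL n).integrable_comp (hdf a b).2⟩
  · intro t
    have := (JL n).intervalIntegral_comp_comm (hdf 0 t)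
    simp only [JL_apply] at this
    rw [this]
    conv_lhs => rw [hf t]
    exact (JL n).map_add _ _

lemma J_ibp {n : ℕ} {T : ℝ} {f df g dg : ℝ → E n}
    (hdf : ∀ a b : ℝ, IntervalIntegrable df volume a b)
    (hdg : ∀ a b : ℝ, IntervalIntegrable dg volume a b)
    (hf : ∀ t, f t = f 0 + ∫ s in (0:ℝ)..t, df s) (hg : ∀ t, g t = g 0 + ∫ s in (0:ℝ)..t, dg s)
    (hfT : f T = f 0) (hgT : g T = g 0) :
    ∫ t in (0:ℝ)..T, ⟪Jmap n (f t), dg t⟫_ℝ = -∫ t in (0:ℝ)..T, ⟪g t, Jmap n (df t)⟫_ℝ :=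
  vector_ibp (J_repr hdf hf).1 hdg (J_repr hdf hf).2 hg (by simp [hfT]) hgT

/-! ### The support function -/

section supp
variable {n : ℕ} {K : Set (E n)}

lemma supp_le (hK : IsCompact K) {x : E n} (hx : x ∈ K) (u : E n) : ⟪x, u⟫_ℝ ≤ suppFn n K u := by
  have hc : Continuous fun x : E n => ⟪x, u⟫_ℝ := by fun_prop
  exact le_csSup (hK.image hc).bddAbove ⟨x, hx, rfl⟩

lemma supp_attained (hK : IsCompact K) (h0 : (0 : E n) ∈ K) (u : E n) :
    ∃ x ∈ K, suppFn n K u = ⟪x, u⟫_ℝ := by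
  have hc : Continuous fun x : E n => ⟪x, u⟫_ℝ := by fun_prop
  exact hK.exists_sSup_image_eq ⟨0, h0⟩ hc.continuousOn

lemma supp_nonneg (hK : IsCompact K) (h0 : (0 : E n) ∈ K) (u : E n) : 0 ≤ suppFn n K u := by
  simpa using supp_le hK h0 u

lemma supp_smul (hK : IsCompact K) (h0 : (0 : E n) ∈ K) {c : ℝ} (hc : 0 ≤ c) (u : E n) :
    suppFn n K (c • u) = c * suppFn n K u := by
  obtain ⟨x, hx, ex⟩ := supp_attained hK h0 u
  obtain ⟨y, hy, ey⟩ := supp_attained hK h0 (c • u)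
  apply le_antisymm
  · rw [ey, inner_smul_right]
    exact mul_le_mul_of_nonneg_left (supp_le hK hy u) hc
  · rw [ex, ← real_inner_smul_right]
    exact supp_le hK hx _

lemma supp_zero (hK : IsCompact K) (h0 : (0 : E n) ∈ K) : suppFn n K 0 = 0 := by
  simpa using supp_smul hK h0 (le_refl (0:ℝ)) 0

lemma supp_pos (hK : IsCompact K) (h0 : (0 : E n) ∈ interior K) {u : E n} (hu : u ≠ 0) :
    0 < suppFn n K u := by
  obtain ⟨ε, hε, hb⟩ := Metric.isOpen_iff.1 isOpen_interior 0 h0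
  have hn : 0 < ‖u‖ := norm_pos_iff.2 hu
  have hx : (ε / 2 / ‖u‖) • u ∈ K := by
    apply interior_subset
    apply hb
    rw [mem_ball_zero_iff, norm_smul, Real.norm_of_nonneg (by positivity), div_mul_cancel₀ _ hn.ne']
    linarith
  refine lt_of_lt_of_le ?_ (supp_le hK hx u)
  rw [real_inner_smul_left, real_inner_self_eq_norm_sq]
  positivity

lemma supp_bound (hK : IsCompact K) (h0 : (0 : E n) ∈ K) :
    ∃ R : NNReal, LipschitzWith R (suppFn n K) ∧ ∀ u, suppFn n K u ≤ R * ‖u‖ := by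
  obtain ⟨R, hR⟩ := hK.isBounded.exists_norm_le
  have hR0 : 0 ≤ R := by simpa using hR 0 h0
  have key : ∀ u v, suppFn n K u ≤ suppFn n K v + R * dist u v := by
    intro u v
    obtain ⟨x, hx, ex⟩ := supp_attained hK h0 u
    rw [ex]
    have h1 : ⟪x, u⟫_ℝ = ⟪x, v⟫_ℝ + ⟪x, u - v⟫_ℝ := by rw [inner_sub_right]; ring
    rw [h1, dist_eq_norm]
    refine add_le_add (supp_le hK hx v) ?_
    exact (real_inner_le_norm _ _).trans (mul_le_mul_of_nonneg_right (hR x hx) (norm_nonneg _))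
  refine ⟨⟨R, hR0⟩, LipschitzWith.of_le_add_mul _ key, fun u => ?_⟩
  have := key u 0
  rw [supp_zero hK h0, dist_zero_right, zero_add] at this
  exact this

lemma supp_hasFDerivAt (hK : IsCompact K) (h0 : (0 : E n) ∈ interior K)
    (hsupp : ContDiffOn ℝ 1 (suppFn n K) {(0 : E n)}ᶜ) (p : ℝ) {u : E n} (hu : u ≠ 0) :
    HasFDerivAt (fun u => suppFn n K u ^ p)
      ((p * suppFn n K u ^ (p - 1)) • fderiv ℝ (suppFn n K) u) u := by
  have hd : DifferentiableAt ℝ (suppFn n K) u :=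
    (hsupp.contDiffAt (isOpen_compl_singleton.mem_nhds hu)).differentiableAt (by simp)
  exact hd.hasFDerivAt.rpow_const (Or.inl (supp_pos hK h0 hu).ne')

lemma supp_grad_bound (hK : IsCompact K) (h0 : (0 : E n) ∈ interior K)
    (hsupp : ContDiffOn ℝ 1 (suppFn n K) {(0 : E n)}ᶜ) {p : ℝ} (hp : 1 < p) :
    ∃ C : ℝ, 0 ≤ C ∧ ∀ u, ‖gradient (fun u => suppFn n K u ^ p) u‖ ≤ C * ‖u‖ ^ (p - 1) := by
  have h0' := interior_subset h0
  obtain ⟨R, hlip, hle⟩ := supp_bound hK h0'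
  have hR := R.coe_nonneg
  refine ⟨p * (R:ℝ) ^ (p - 1) * R, by positivity, fun u => ?_⟩
  rw [gradient, LinearIsometryEquiv.norm_map]
  by_cases hu : u = 0
  · subst hu
    have : HasFDerivAt (fun u => suppFn n K u ^ p) (0 : E n →L[ℝ] ℝ) 0 := by
      have h1 := hasFDerivAt_norm_rpow (0 : E n) hp
      rw [hasFDerivAt_iff_isLittleO] at h1 ⊢
      simp only [norm_zero, supp_zero hK h0', Real.zero_rpow (by linarith : p ≠ 0), sub_zero,
        zero_apply] at h1 ⊢
      refine Asymptotics.IsBigO.trans_isLittleO ?_ (h1.congr_left (f₂ := fun x => ‖x‖ ^ p) ?_)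
      · refine Asymptotics.IsBigO.of_bound ((R:ℝ) ^ p) (Eventually.of_forall fun x => ?_)
        rw [Real.norm_of_nonneg (Real.rpow_nonneg (supp_nonneg hK h0' _) _),
          Real.norm_of_nonneg (by positivity), ← Real.mul_rpow hR (norm_nonneg _)]
        exact Real.rpow_le_rpow (supp_nonneg hK h0' _) (hle x) (by linarith)
      · intro x; simp
    rw [this.fderiv]
    simp [Real.zero_rpow (by linarith : p - 1 ≠ 0)]
  · rw [(supp_hasFDerivAt hK h0 hsupp p hu).fderiv, norm_smul]
    have hh := supp_nonneg hK h0' u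
    rw [Real.norm_of_nonneg (by positivity)]
    have h1 : suppFn n K u ^ (p - 1) ≤ (R:ℝ) ^ (p - 1) * ‖u‖ ^ (p - 1) := by
      rw [← Real.mul_rpow hR (norm_nonneg _)]
      exact Real.rpow_le_rpow hh (hle u) (by linarith)
    have h2 := norm_fderiv_le_of_lipschitz ℝ hlip (x₀ := u)
    calc p * suppFn n K u ^ (p - 1) * ‖fderiv ℝ (suppFn n K) u‖
        ≤ p * ((R:ℝ) ^ (p - 1) * ‖u‖ ^ (p - 1)) * R := by gcongr
      _ = _ := by ring

lemma supp_euler (hK : IsCompact K) (h0 : (0 : E n) ∈ interior K)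
    (hsupp : ContDiffOn ℝ 1 (suppFn n K) {(0 : E n)}ᶜ) {p : ℝ} (hp : 1 < p) (u : E n) :
    ⟪gradient (fun u => suppFn n K u ^ p) u, u⟫_ℝ = p * suppFn n K u ^ p := by
  have h0' := interior_subset h0
  by_cases hu : u = 0
  · subst hu
    simp [supp_zero hK h0', Real.zero_rpow (by linarith : p ≠ 0)]
  · rw [gradient, InnerProductSpace.toDual_symm_apply]
    have hd := (supp_hasFDerivAt hK h0 hsupp p hu).differentiableAt.hasFDerivAt
    have hc : HasDerivAt (fun c : ℝ => c • u) u 1 := by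
      simpa using (hasDerivAt_id (1:ℝ)).smul_const u
    have h1 : HasDerivAt (fun c : ℝ => suppFn n K (c • u) ^ p)
        (fderiv ℝ (fun u => suppFn n K u ^ p) u u) 1 := by
      have hd' : HasFDerivAt (fun u => suppFn n K u ^ p)
        (fderiv ℝ (fun u => suppFn n K u ^ p) u) ((1:ℝ) • u) := by simpa using hd
      exact hd'.comp_hasDerivAt (1:ℝ) hc
    have h2 : HasDerivAt (fun c : ℝ => c ^ p * suppFn n K u ^ p) (p * suppFn n K u ^ p) 1 := by
      simpa using (Real.hasDerivAt_rpow_const (x := 1) (p := p) (Or.inl one_ne_zero)).mul_const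
        (suppFn n K u ^ p)
    have h3 : (fun c : ℝ => suppFn n K (c • u) ^ p) =ᶠ[𝓝 1] fun c => c ^ p * suppFn n K u ^ p := by
      filter_upwards [lt_mem_nhds (zero_lt_one' ℝ)] with c hc
      rw [supp_smul hK h0' hc.le, Real.mul_rpow hc.le (supp_nonneg hK h0' _)]
    exact h1.unique (h2.congr_of_eventuallyEq h3)

end supp

lemma measurable_gradient' {n : ℕ} (f : E n → ℝ) : Measurable (gradient f) := by
  unfold gradient
  exact (InnerProductSpace.toDual ℝ (E n)).symm.continuous.measurable.comp (measurable_fderiv ℝ f)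

lemma young_crude {a b p : ℝ} (ha : 0 ≤ a) (hb : 0 ≤ b) (hp : 1 < p) :
    a ^ (p - 1) * b ≤ a ^ p + b ^ p := by
  have e : ∀ c : ℝ, 0 ≤ c → c ^ (p - 1) * c = c ^ p := by
    intro c hc
    rcases hc.eq_or_lt with rfl | hc
    · simp [Real.zero_rpow (by linarith : p ≠ 0)]
    · rw [Real.rpow_sub_one hc.ne', div_mul_cancel₀ _ hc.ne']
  rcases le_total a b with h | h
  · calc a ^ (p - 1) * b ≤ b ^ (p - 1) * b := by
          gcongr
      _ = b ^ p := e b hb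
      _ ≤ _ := by have := Real.rpow_nonneg ha p; linarith
  · calc a ^ (p - 1) * b ≤ a ^ (p - 1) * a := by gcongr
      _ = a ^ p := e a ha
      _ ≤ _ := by have := Real.rpow_nonneg hb p; linarith

lemma integrable_pairing {n : ℕ} {p C : ℝ} (hp : 1 < p) (hC : 0 ≤ C) {μ : Measure ℝ}
    [IsFiniteMeasure μ] {G a b : ℝ → E n} (hG : AEStronglyMeasurable G μ)
    (ha : MemLp a (ENNReal.ofReal p) μ) (hb : MemLp b (ENNReal.ofReal p) μ)
    (hGa : ∀ t, ‖G t‖ ≤ C * ‖a t‖ ^ (p - 1)) :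
    Integrable G μ ∧ Integrable (fun t => ⟪G t, b t⟫_ℝ) μ := by
  have hp0 : (ENNReal.ofReal p).toReal = p := ENNReal.toReal_ofReal (by linarith)
  have ia := ha.integrable_norm_rpow'
  have ib := hb.integrable_norm_rpow'
  rw [hp0] at ia ib
  constructor
  · refine ((ia.add (integrable_const (1:ℝ))).const_mul C).mono' hG (Eventually.of_forall fun t => ?_)
    refine (hGa t).trans ?_
    have := young_crude (norm_nonneg (a t)) zero_le_one hp
    simp only [mul_one, Real.one_rpow] at this
    exact mul_le_mul_of_nonneg_left this hC
  · refine ((ia.add ib).const_mul C).mono' (hG.inner hb.1) (Eventually.of_forall fun t => ?_)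
    refine (norm_inner_le_norm _ _).trans ?_
    have := young_crude (norm_nonneg (a t)) (norm_nonneg (b t)) hp
    calc ‖G t‖ * ‖b t‖ ≤ C * ‖a t‖ ^ (p - 1) * ‖b t‖ := by gcongr; exact hGa t
      _ = C * (‖a t‖ ^ (p - 1) * ‖b t‖) := by ring
      _ ≤ _ := mul_le_mul_of_nonneg_left this hC

/-! ### Du Bois-Reymond -/

lemma periodic_test_ae {n : ℕ} {T : ℝ} (hT : 0 < T) {D : ℝ → E n}
    (hD : Integrable D (volume.restrict (Set.Ioc (0:ℝ) T)))
    (hD0 : ∫ t in (0:ℝ)..T, D t = 0)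
    (H : ∀ v : ℝ → E n, Function.Periodic v T → StronglyMeasurable v → (∃ B : ℝ, ∀ t, ‖v t‖ ≤ B) →
      ∫ t in (0:ℝ)..T, v t = 0 → ∫ t in (0:ℝ)..T, ⟪D t, v t⟫_ℝ = 0) :
    ∀ᵐ t ∂(volume.restrict (Set.Ioc (0:ℝ) T)), D t = 0 := by
  obtain ⟨D', hD'm, hDD'⟩ := hD.1
  set w : ℝ → E n := fun t => (1 + ‖D' t‖)⁻¹ • D' t with hw
  have hwm : StronglyMeasurable w := by
    have : Measurable fun t => (1 + ‖D' t‖)⁻¹ := (hD'm.norm.measurable.const_add 1).inv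
    exact this.stronglyMeasurable.smul hD'm
  have hwb : ∀ t, ‖w t‖ ≤ 1 := by
    intro t
    have h1 : 0 < 1 + ‖D' t‖ := by positivity
    rw [hw]
    simp only
    rw [norm_smul, Real.norm_of_nonneg (by positivity), inv_mul_le_iff₀ h1]
    linarith
  set v : ℝ → E n := fun t => w (T * Int.fract (t / T)) with hv
  have hvm : StronglyMeasurable v := by
    apply hwm.comp_measurable
    exact (measurable_fract.comp (measurable_id.div_const T)).const_mul T
  have hvp : Function.Periodic v T := by
    intro t
    simp only [hv]
    rw [add_div, div_self hT.ne', Int.fract_add_one]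
  have hvb : ∀ t, ‖v t‖ ≤ 1 := fun t => hwb _
  set k : E n := T⁻¹ • ∫ t in (0:ℝ)..T, v t with hk
  have bddint : ∀ {f : ℝ → E n} (_ : StronglyMeasurable f) {B : ℝ} (_ : ∀ t, ‖f t‖ ≤ B),
      Integrable f (volume.restrict (Set.Ioc (0:ℝ) T)) := by
    intro f hf B hB
    exact (integrable_const B).mono' hf.aestronglyMeasurable (Eventually.of_forall hB)
  have hvi : IntervalIntegrable v volume 0 T :=
    (intervalIntegrable_iff_integrableOn_Ioc_of_le hT.le).2 (bddint hvm hvb)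
  have hDi : IntervalIntegrable D volume 0 T :=
    (intervalIntegrable_iff_integrableOn_Ioc_of_le hT.le).2 hD
  have hDvint : Integrable (fun t => ⟪D t, v t⟫_ℝ) (volume.restrict (Set.Ioc (0:ℝ) T)) := by
    refine hD.norm.mono' (hD.1.inner hvm.aestronglyMeasurable) (Eventually.of_forall fun t => ?_)
    refine (norm_inner_le_norm _ _).trans ?_
    exact mul_le_of_le_one_right (norm_nonneg _) (hvb t)
  have hH := H (fun t => v t - k) (by intro t; simp [hvp t]) (hvm.sub stronglyMeasurable_const)
    ⟨1 + ‖k‖, fun t => (norm_sub_le _ _).trans (by linarith [hvb t])⟩ (by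
      rw [intervalIntegral.integral_sub hvi (by simp)]
      simp [hk, hT.ne'])
  have hDk : IntervalIntegrable (fun t => ⟪D t, k⟫_ℝ) volume 0 T :=
    ⟨hDi.1.inner_const k, hDi.2.inner_const k⟩
  have hDv : IntervalIntegrable (fun t => ⟪D t, v t⟫_ℝ) volume 0 T :=
    (intervalIntegrable_iff_integrableOn_Ioc_of_le hT.le).2 hDvint
  have hk0 : ∫ t in (0:ℝ)..T, ⟪D t, k⟫_ℝ = 0 := by
    have := (innerSL ℝ k).intervalIntegral_comp_comm hDi
    simp only [innerSL_apply_apply, hD0, inner_zero_right] at this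
    simpa [real_inner_comm] using this
  simp only [inner_sub_right] at hH
  rw [intervalIntegral.integral_sub hDv hDk, hk0, sub_zero,
    intervalIntegral.integral_of_le hT.le] at hH
  have hne : ∀ᵐ t ∂(volume.restrict (Set.Ioc (0:ℝ) T)), t ∈ Set.Ioc (0:ℝ) T ∧ t ≠ T := by
    refine (ae_restrict_mem measurableSet_Ioc).and (ae_restrict_of_ae ?_)
    simp [ae_iff, measure_singleton]
  have hform : ∀ᵐ t ∂(volume.restrict (Set.Ioc (0:ℝ) T)),
      ⟪D t, v t⟫_ℝ = (1 + ‖D t‖)⁻¹ * ‖D t‖ ^ 2 := by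
    filter_upwards [hne, hDD'] with t ⟨ht, htT⟩ hd
    have hlt : t < T := lt_of_le_of_ne ht.2 htT
    have : Int.fract (t / T) = t / T := by
      rw [Int.fract_eq_self]
      exact ⟨div_nonneg ht.1.le hT.le, (div_lt_one hT).2 hlt⟩
    have e : v t = w t := by
      simp only [hv, this]
      rw [mul_div_cancel₀ _ hT.ne']
    rw [e]
    simp only [hw, ← hd]
    rw [real_inner_smul_right, real_inner_self_eq_norm_sq]
  have hz := (integral_eq_zero_iff_of_nonneg_ae (by
    filter_upwards [hform] with t ht
    rw [ht]
    simp only [Pi.zero_apply]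
    positivity) hDvint).1 hH
  filter_upwards [hz, hform] with t h1 h2
  rw [h2] at h1
  simp only [Pi.zero_apply, mul_eq_zero, inv_eq_zero] at h1
  rcases h1 with h1 | h1
  · have := norm_nonneg (D t); linarith
  · simpa using h1

lemma exists_test {n : ℕ} {T : ℝ} (hT : 0 < T) (q : ENNReal) {v : ℝ → E n}
    (hvp : Function.Periodic v T)
    (hvm : StronglyMeasurable v) {B : ℝ} (hB : ∀ t, ‖v t‖ ≤ B) (hv0 : ∫ t in (0:ℝ)..T, v t = 0) :
    (∀ a b : ℝ, IntervalIntegrable v volume a b) ∧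
    MemLp v q (volume.restrict (Set.Ioc (0:ℝ) T)) ∧
    ∃ ξ : ℝ → E n, Function.Periodic ξ T ∧ (∀ t, ξ t = ξ 0 + ∫ s in (0:ℝ)..t, v s) ∧
      ∫ t in (0:ℝ)..T, ξ t = 0 := by
  have hi : ∀ a b : ℝ, IntervalIntegrable v volume a b := by
    intro a b
    refine (intervalIntegrable_const (c := B)).mono_fun' hvm.aestronglyMeasurable
      (Eventually.of_forall hB)
  refine ⟨hi, MemLp.of_bound hvm.aestronglyMeasurable B (Eventually.of_forall hB), ?_⟩
  set I : ℝ → E n := fun t => ∫ s in (0:ℝ)..t, v s with hI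
  have hIc : Continuous I := intervalIntegral.continuous_primitive hi 0
  refine ⟨fun t => -(T⁻¹ • ∫ s in (0:ℝ)..T, I s) + I t, ?_, ?_, ?_⟩
  · intro t
    simp only
    congr 1
    have h1 : I (t + T) = I t + ∫ s in t..(t + T), v s :=
      (intervalIntegral.integral_add_adjacent_intervals (hi _ _) (hi _ _)).symm
    have h2 := hvp.intervalIntegral_add_eq t 0
    rw [zero_add, hv0] at h2
    rw [h1, h2, add_zero]
  · intro t
    simp [hI]
  · rw [intervalIntegral.integral_add (by simp) (hIc.intervalIntegrable _ _)]
    simp [hT.ne']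

/-- `z ∈ 𝓔_p` is a critical point of `I_p(z) = ∫₀^{2π} h_K^p(ż(t)) dt` iff it satisfies
the Euler equation `∇(h_K^p)(ż) = (p/2)·λ·Jz + α` a.e., where `λ = I_p(z)`. -/
theorem isCriticalPoint_iff_euler (n : ℕ) (K : Set (E n)) (hK : IsConvexBody n K)
    (h0 : (0 : E n) ∈ interior K)
    (hsupp : ContDiffOn ℝ 1 (suppFn n K) {(0 : E n)}ᶜ)
    (p : ℝ) (hp : 1 < p) (z dz : ℝ → E n) (hz : InE n p z dz) :
    IsCriticalPoint n p K z dz ↔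
      ∃ α : E n, ∀ᵐ t ∂(volume.restrict (Set.Ioc (0:ℝ) (2 * π))),
        gradient (fun u => suppFn n K u ^ p) (dz t) =
          (p / 2 * ∫ s in (0:ℝ)..(2 * π), suppFn n K (dz s) ^ p) • Jmap n (z t) + α := by
  have hT : (0:ℝ) < 2 * π := by positivity
  set T : ℝ := 2 * π with hTdef
  have hKc := hK.1
  obtain ⟨zp, zi, zr, zL, z0, zact⟩ := hz
  obtain ⟨C, hC, hGb⟩ := supp_grad_bound hKc h0 hsupp hp
  set gr : E n → E n := gradient (fun u => suppFn n K u ^ p) with hgr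
  set lam : ℝ := ∫ s in (0:ℝ)..T, suppFn n K (dz s) ^ p with hlam
  set c : ℝ := p / 2 * lam with hc
  have zT : z T = z 0 := by simpa using zp 0
  have hzc : Continuous z := continuous_of_repr zi zr
  have hJz : Continuous fun t => Jmap n (z t) := (JL n).continuous.comp hzc
  have hGm : AEStronglyMeasurable (fun t => gr (dz t)) (volume.restrict (Set.Ioc (0:ℝ) T)) :=
    ((measurable_gradient' _).comp_aemeasurable zL.1.aemeasurable).aestronglyMeasurable
  have hGi : ∀ {b : ℝ → E n}, MemLp b (ENNReal.ofReal p) (volume.restrict (Set.Ioc (0:ℝ) T)) →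
      IntervalIntegrable (fun t => ⟪gr (dz t), b t⟫_ℝ) volume 0 T := fun hb =>
    (intervalIntegrable_iff_integrableOn_Ioc_of_le hT.le).2
      (integrable_pairing hp hC hGm zL hb (fun t => hGb _)).2
  have hG1 : IntervalIntegrable (fun t => gr (dz t)) volume 0 T :=
    (intervalIntegrable_iff_integrableOn_Ioc_of_le hT.le).2
      (integrable_pairing hp hC hGm zL zL (fun t => hGb _)).1
  have hGdz : ∫ t in (0:ℝ)..T, ⟪gr (dz t), dz t⟫_ℝ = p * lam := by
    rw [hlam, ← intervalIntegral.integral_const_mul]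
    congr 1
    funext t
    exact supp_euler hKc h0 hsupp hp (dz t)
  constructor
  · intro hcrit
    set F : ℝ → E n := fun t => gr (dz t) - c • Jmap n (z t) with hF
    have hFi : IntervalIntegrable F volume 0 T :=
      hG1.sub ((hJz.const_smul c).intervalIntegrable 0 T)
    set α : E n := T⁻¹ • ∫ t in (0:ℝ)..T, F t with hα
    have hDi : IntervalIntegrable (fun t => F t - α) volume 0 T := hFi.sub (by simp)
    have hae := periodic_test_ae hT (D := fun t => F t - α)
      ((intervalIntegrable_iff_integrableOn_Ioc_of_le hT.le).1 hDi) (by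
        rw [intervalIntegral.integral_sub hFi (by simp)]
        simp [hα, hT.ne']) (by
        intro v vp vm ⟨B, hB⟩ v0
        obtain ⟨vi, vL, ξ, ξp, ξr, ξ0⟩ := exists_test hT (ENNReal.ofReal p) vp vm hB v0
        have ξT : ξ T = ξ 0 := by simpa using ξp 0
        have hξc : Continuous ξ := continuous_of_repr vi ξr
        have hibp := J_ibp zi vi zr ξr zT ξT
        set l : ℝ := ∫ t in (0:ℝ)..T, ⟪ξ t, Jmap n (dz t)⟫_ℝ with hl
        have hJdz := (J_repr zi zr).1
        have hzz : ∫ t in (0:ℝ)..T, ⟪z t, Jmap n (dz t)⟫_ℝ = -2 := by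
          have := J_ibp zi zi zr zr zT zT
          linarith
        have key := hcrit (fun t => ξ t + (l / 2) • z t) (fun t => v t + (l / 2) • dz t)
          (by intro t; simp only [zp t]; rw [← hTdef, ξp t])
          (fun a b => (vi a b).add ((zi a b).smul (l / 2)))
          (by
            intro t
            have hs : IntervalIntegrable (fun s => (l / 2) • dz s) volume 0 t :=
              (zi 0 t).smul (l / 2)
            rw [intervalIntegral.integral_add (vi 0 t) hs,
              intervalIntegral.integral_smul, ξr t, zr t, smul_add]
            abel)
          (vL.add (zL.const_smul (l / 2)))
          (by
            have hs : IntervalIntegrable (fun s => (l / 2) • z s) volume 0 T :=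
              (hzc.const_smul (l / 2)).intervalIntegrable _ _
            rw [← hTdef, intervalIntegral.integral_add (hξc.intervalIntegrable _ _) hs,
              intervalIntegral.integral_smul, ξ0, z0]
            simp)
          (by
            simp only [inner_add_left, real_inner_smul_left]
            rw [intervalIntegral.integral_add (intervalIntegrable_inner_cont hξc (hJdz _ _))
              ((intervalIntegrable_inner_cont hzc (hJdz _ _)).const_mul _),
              intervalIntegral.integral_const_mul, hzz]
            ring)
        simp only [inner_add_right, real_inner_smul_right] at key
        rw [intervalIntegral.integral_add (hGi vL) ((hGi zL).const_mul _),
          intervalIntegral.integral_const_mul, hGdz] at key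
        have hJv := intervalIntegrable_inner_cont hJz (vi 0 T)
        have hαv : ∫ t in (0:ℝ)..T, ⟪α, v t⟫_ℝ = 0 := by
          have := (innerSL ℝ α).intervalIntegral_comp_comm (vi 0 T)
          simpa [innerSL_apply_apply, v0] using this
        have hαi := intervalIntegrable_inner_cont (f := fun _ => α) continuous_const (vi 0 T)
        simp only [hF, inner_sub_left, real_inner_smul_left]
        rw [intervalIntegral.integral_sub ((hGi vL).sub (hJv.const_mul c)) hαi,
          intervalIntegral.integral_sub (hGi vL) (hJv.const_mul c),
          intervalIntegral.integral_const_mul, hαv, hibp]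
        rw [hc]
        linarith)
    refine ⟨α, ?_⟩
    filter_upwards [hae] with t ht
    simp only [hF] at ht
    rw [sub_sub, sub_eq_zero] at ht
    exact ht
  · rintro ⟨α, hα⟩ ξ dξ ξp ξi ξr ξL ξ0 ξJ
    have ξT : ξ T = ξ 0 := by simpa using ξp 0
    have hibp := J_ibp zi ξi zr ξr zT ξT
    rw [ξJ, neg_zero] at hibp
    have hd0 : ∫ t in (0:ℝ)..T, dξ t = 0 := by
      have := ξr T
      rw [ξT] at this
      simpa using this.symm
    have hαv : ∫ t in (0:ℝ)..T, ⟪α, dξ t⟫_ℝ = 0 := by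
      have := (innerSL ℝ α).intervalIntegral_comp_comm (ξi 0 T)
      simpa [innerSL_apply_apply, hd0] using this
    have hαi := intervalIntegrable_inner_cont (f := fun _ => α) continuous_const (ξi 0 T)
    have hJv := intervalIntegrable_inner_cont hJz (ξi 0 T)
    have e : ∫ t in (0:ℝ)..T, ⟪gr (dz t), dξ t⟫_ℝ =
        ∫ t in (0:ℝ)..T, (c * ⟪Jmap n (z t), dξ t⟫_ℝ + ⟪α, dξ t⟫_ℝ) := by
      rw [intervalIntegral.integral_of_le hT.le, intervalIntegral.integral_of_le hT.le]
      apply MeasureTheory.integral_congr_ae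
      filter_upwards [hα] with t ht
      rw [ht, inner_add_left, real_inner_smul_left]
    rw [e, intervalIntegral.integral_add (hJv.const_mul c) hαi,
      intervalIntegral.integral_const_mul, hibp, hαv]
    simp
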